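/- Let C be the middle-thirds Cantor set C_{1/3}. Then the set { x² + y² : x ∈ C, y ∈ C } contains a nonempty open interval. -/

import Mathlib

/-!
Let `F` be a function on the unit square whose slopes in the two variables lie in `[m₁, M₁]` and
`[m₂, M₂]`. Removing the middle gap of `C_a` in the first variable creates no hole in the values of
`F` if `(1 - 2a) M₁ ≤ m₂`, since the variation of `F` along a full vertical side bridges the gap;
removing it in the second variable from the two remaining columns, of width `a`, creates no hole if
`(1 - 2a) M₂ ≤ a m₁`. Both inequalities are homogeneous in the slopes, hence are inherited by the
restrictions of `F` to the four corner squares. Iterating, every value between `F 0 0` and `F 1 1`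
is approximated by values on `C_a × C_a`, and it is attained because `C_a` is compact.

For `x² + y²` the inequalities hold on a small enough copy of `C_a × C_a` near `(1, 1 - a)`, where
the partial derivatives are close to `2` and `2(1 - a)`.
-/

open Set MeasureTheory

/-- The middle Cantor set `C_a`, for `0 < a < 1/2`:
`C_a = { (1-a) * ∑ εₖ aᵏ : εₖ ∈ {0,1} }`. -/
noncomputable def middleCantor (a : ℝ) : Set ℝ :=
  {x : ℝ | ∃ ε : ℕ → Bool, x = (1 - a) * ∑' k : ℕ, (if ε k then a ^ k else 0)}

/-- The arithmetic difference `C_a - l · C_b`. -/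
noncomputable def diffSet (a b l : ℝ) : Set ℝ :=
  {z : ℝ | ∃ x ∈ middleCantor a, ∃ y ∈ middleCantor b, z = x - l * y}

open Filter Topology

section SlopeBounds

/-- The difference quotients of `f` between points of `s` lie in `[m, M]`. The bounds are stated
without division, so that affine substitutions simply rescale them. -/
def SlopesOn (f : ℝ → ℝ) (s : Set ℝ) (m M : ℝ) : Prop :=
  ∀ ⦃x⦄, x ∈ s → ∀ ⦃y⦄, y ∈ s → x ≤ y → m * (y - x) ≤ f y - f x ∧ f y - f x ≤ M * (y - x)

variable {f : ℝ → ℝ} {s t : Set ℝ} {m M : ℝ}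

lemma SlopesOn.comp_mul_add (h : SlopesOn f t m M) {r b : ℝ} (hr : 0 ≤ r)
    (hst : MapsTo (fun x => r * x + b) s t) :
    SlopesOn (fun x => f (r * x + b)) s (r * m) (r * M) := by
  intro x hx y hy hxy
  obtain ⟨hm, hM⟩ := h (hst hx) (hst hy) (by dsimp only; gcongr)
  exact ⟨by linarith, by linarith⟩

lemma SlopesOn.add_const (h : SlopesOn f s m M) (c : ℝ) : SlopesOn (fun x => f x + c) s m M :=
  fun x hx y hy hxy => by simpa only [add_sub_add_right_eq_sub] using h hx hy hxy

lemma SlopesOn.const_add (h : SlopesOn f s m M) (c : ℝ) : SlopesOn (fun x => c + f x) s m M :=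
  fun x hx y hy hxy => by simpa only [add_sub_add_left_eq_sub] using h hx hy hxy

lemma SlopesOn.lipschitzOnWith (h : SlopesOn f s m M) :
    LipschitzOnWith (|m| + |M|).toNNReal f s := by
  refine LipschitzOnWith.of_le_add_mul' _ fun x hx y hy => ?_
  rw [Real.dist_eq]
  rcases le_total x y with hxy | hxy
  · rw [abs_sub_comm, abs_of_nonneg (sub_nonneg.2 hxy)]
    nlinarith [(h hx hy hxy).1, neg_abs_le m, abs_nonneg M]
  · rw [abs_of_nonneg (sub_nonneg.2 hxy)]
    nlinarith [(h hy hx hxy).2, le_abs_self M, abs_nonneg m]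

lemma slopesOn_sq (u v : ℝ) : SlopesOn (fun x => x ^ 2) (Icc u v) (2 * u) (2 * v) := by
  intro x hx y hy hxy
  have factor : y ^ 2 - x ^ 2 = (x + y) * (y - x) := by ring
  rw [factor]
  have hxy' : 0 ≤ y - x := sub_nonneg.2 hxy
  exact ⟨mul_le_mul_of_nonneg_right (by linarith [hx.1, hy.1]) hxy',
    mul_le_mul_of_nonneg_right (by linarith [hx.2, hy.2]) hxy'⟩

lemma continuousOn_uncurry_of_slopesOn {F : ℝ → ℝ → ℝ} {m₁ M₁ m₂ M₂ : ℝ}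
    (h₁ : ∀ y ∈ t, SlopesOn (F · y) s m₁ M₁) (h₂ : ∀ x ∈ s, SlopesOn (F x) t m₂ M₂) :
    ContinuousOn (Function.uncurry F) (s ×ˢ t) :=
  continuousOn_prod_of_continuousOn_lipschitzOnWith _ _
    (fun x hx => (h₂ x hx).lipschitzOnWith.continuousOn) fun y hy => (h₁ y hy).lipschitzOnWith

end SlopeBounds

section MiddleCantor

variable {a : ℝ}

lemma summable_ite_pow (ha₀ : 0 ≤ a) (ha₁ : a < 1) (ε : ℕ → Bool) :
    Summable fun k => if ε k then a ^ k else 0 :=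
  (summable_geometric_of_lt_one ha₀ ha₁).of_nonneg_of_le
    (fun k => by split_ifs <;> positivity) fun k => by split_ifs <;> simp [ha₀]

lemma zero_mem_middleCantor (a : ℝ) : 0 ∈ middleCantor a :=
  ⟨fun _ => false, by simp⟩

lemma middleCantor_subset_Icc (ha₀ : 0 ≤ a) (ha₁ : a < 1) : middleCantor a ⊆ Icc 0 1 := by
  rintro _ ⟨ε, rfl⟩
  have ha : 0 < 1 - a := sub_pos.2 ha₁
  constructor
  · exact mul_nonneg ha.le (tsum_nonneg fun k => by split_ifs <;> positivity)
  · calc (1 - a) * ∑' k, (if ε k then a ^ k else 0)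
        ≤ (1 - a) * ∑' k, a ^ k := by
          gcongr with k
          · exact summable_ite_pow ha₀ ha₁ ε
          · exact summable_geometric_of_lt_one ha₀ ha₁
          · split_ifs <;> simp [ha₀]
      _ = 1 := by rw [tsum_geometric_of_lt_one ha₀ ha₁, mul_inv_cancel₀ ha.ne']

lemma isCompact_middleCantor (ha₀ : 0 ≤ a) (ha₁ : a < 1) : IsCompact (middleCantor a) := by
  have coding_continuous :
      Continuous fun ε : ℕ → Bool => (1 - a) * ∑' k, (if ε k then a ^ k else 0) := by
    refine continuous_const.mul (continuous_tsum (fun k => ?_)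
      (summable_geometric_of_lt_one ha₀ ha₁) fun k ε => ?_)
    · exact (continuous_of_discreteTopology (f := fun b : Bool => if b then a ^ k else 0)).comp
        (continuous_apply k)
    · split_ifs <;> simp [abs_of_nonneg, ha₀]
  have range_coding : middleCantor a =
      range fun ε : ℕ → Bool => (1 - a) * ∑' k, (if ε k then a ^ k else 0) := by
    ext x
    simp only [middleCantor, mem_ofPred_eq, mem_range, eq_comm]
  rw [range_coding]
  exact isCompact_range coding_continuous

/-- The similarities `x ↦ a x` (for `false`) and `x ↦ a x + (1 - a)` (for `true`) of the iterated
function system whose attractor is `middleCantor a`. -/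
def cantorBranch (a : ℝ) (b : Bool) (x : ℝ) : ℝ :=
  a * x + if b then 1 - a else 0

lemma cantorBranch_mem_middleCantor (ha₀ : 0 ≤ a) (ha₁ : a < 1) (b : Bool) {x : ℝ}
    (hx : x ∈ middleCantor a) : cantorBranch a b x ∈ middleCantor a := by
  obtain ⟨ε, rfl⟩ := hx
  let ε' : ℕ → Bool := fun k => k.casesOn b ε
  have head : ε' 0 = b := rfl
  have tail : ∀ k, (if ε' (k + 1) then a ^ (k + 1) else 0) = a * if ε k then a ^ k else 0 :=
    fun k => by simp only [ε', pow_succ', mul_ite, mul_zero]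
  refine ⟨ε', ?_⟩
  rw [(summable_ite_pow ha₀ ha₁ ε').tsum_eq_zero_add, tsum_congr tail, tsum_mul_left]
  simp only [head, cantorBranch, pow_zero]
  split_ifs <;> ring

lemma cantorBranch_mapsTo_Icc (ha₀ : 0 ≤ a) (ha₁ : a ≤ 1) (b : Bool) :
    MapsTo (cantorBranch a b) (Icc 0 1) (Icc 0 1) := by
  rintro x ⟨hx₀, hx₁⟩
  unfold cantorBranch
  split_ifs <;> constructor <;> nlinarith

lemma pow_mul_mem_middleCantor (ha₀ : 0 ≤ a) (ha₁ : a < 1) (n : ℕ) {x : ℝ}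
    (hx : x ∈ middleCantor a) : a ^ n * x ∈ middleCantor a := by
  induction n with
  | zero => simpa only [pow_zero, one_mul] using hx
  | succ n ih =>
    have branch_eq : a ^ (n + 1) * x = cantorBranch a false (a ^ n * x) := by
      simp only [cantorBranch, Bool.false_eq_true, ↓reduceIte]
      ring
    exact branch_eq ▸ cantorBranch_mem_middleCantor ha₀ ha₁ false ih

lemma pow_succ_mul_add_one_sub_mem_middleCantor (ha₀ : 0 ≤ a) (ha₁ : a < 1) (n : ℕ) {x : ℝ}
    (hx : x ∈ middleCantor a) : a ^ (n + 1) * x + (1 - a) ∈ middleCantor a := by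
  have branch_eq : a ^ (n + 1) * x + (1 - a) = cantorBranch a true (a ^ n * x) := by
    simp only [cantorBranch, ↓reduceIte]
    ring
  exact branch_eq ▸
    cantorBranch_mem_middleCantor ha₀ ha₁ true (pow_mul_mem_middleCantor ha₀ ha₁ n hx)

lemma pow_mul_add_one_sub_pow_mem_middleCantor (ha₀ : 0 ≤ a) (ha₁ : a < 1) (n : ℕ) {x : ℝ}
    (hx : x ∈ middleCantor a) : a ^ n * x + (1 - a ^ n) ∈ middleCantor a := by
  induction n with
  | zero => simpa only [pow_zero, one_mul, sub_self, add_zero] using hx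
  | succ n ih =>
    have branch_eq : a ^ (n + 1) * x + (1 - a ^ (n + 1)) =
        cantorBranch a true (a ^ n * x + (1 - a ^ n)) := by
      simp only [cantorBranch, ↓reduceIte]
      ring
    exact branch_eq ▸ cantorBranch_mem_middleCantor ha₀ ha₁ true ih

end MiddleCantor

section Image

variable {a m₁ M₁ m₂ M₂ t : ℝ} {F : ℝ → ℝ → ℝ}

lemma exists_cantorBranch_mem_Icc (ha₀ : 0 ≤ a) (ha : a ≤ 1 / 2)
    (h₁ : ∀ y ∈ Icc (0 : ℝ) 1, SlopesOn (F · y) (Icc 0 1) m₁ M₁)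
    (h₂ : ∀ x ∈ Icc (0 : ℝ) 1, SlopesOn (F x) (Icc 0 1) m₂ M₂)
    (hgap₁ : (1 - 2 * a) * M₁ ≤ m₂) (hgap₂ : (1 - 2 * a) * M₂ ≤ a * m₁)
    (ht : t ∈ Icc (F 0 0) (F 1 1)) :
    ∃ i j, t ∈ Icc (F (cantorBranch a i 0) (cantorBranch a j 0))
      (F (cantorBranch a i 1) (cantorBranch a j 1)) := by
  have mem₀ : (0 : ℝ) ∈ Icc (0 : ℝ) 1 := unitInterval.zero_mem
  have mem₁ : (1 : ℝ) ∈ Icc (0 : ℝ) 1 := unitInterval.one_mem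
  have mem_a : a ∈ Icc (0 : ℝ) 1 := ⟨ha₀, by linarith⟩
  have mem_b : 1 - a ∈ Icc (0 : ℝ) 1 := ⟨by linarith, by linarith⟩
  have hab : a ≤ 1 - a := by linarith
  have left_column : F 0 (1 - a) ≤ F a a := by
    linarith [(h₂ 0 mem₀ mem_a mem_b hab).2, (h₁ a mem_a mem₀ mem_a ha₀).1]
  have columns : F (1 - a) 0 ≤ F a 1 := by
    linarith [(h₁ 0 mem₀ mem_a mem_b hab).2, (h₂ a mem_a mem₀ mem₁ zero_le_one).1]
  have right_column : F (1 - a) (1 - a) ≤ F 1 a := by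
    linarith [(h₂ (1 - a) mem_b mem_a mem_b hab).2, (h₁ a mem_a mem_b mem₁ mem_b.2).1]
  have lower_false : cantorBranch a false 0 = 0 := by simp [cantorBranch]
  have upper_false : cantorBranch a false 1 = a := by simp [cantorBranch]
  have lower_true : cantorBranch a true 0 = 1 - a := by simp [cantorBranch]
  have upper_true : cantorBranch a true 1 = 1 := by simp [cantorBranch]
  simp only [Bool.exists_bool, lower_false, upper_false, lower_true, upper_true]
  rcases le_total t (F a 1) with ht_left | ht_right
  · rcases le_total t (F a a) with ht_low | ht_high
    · exact .inl (.inl ⟨ht.1, ht_low⟩)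
    · exact .inl (.inr ⟨left_column.trans ht_high, ht_left⟩)
  · rcases le_total t (F 1 a) with ht_low | ht_high
    · exact .inr (.inl ⟨columns.trans ht_right, ht_low⟩)
    · exact .inr (.inr ⟨right_column.trans ht_high, ht.2⟩)

lemma exists_middleCantor_abs_sub_le (ha₀ : 0 ≤ a) (ha : a ≤ 1 / 2)
    (h₁ : ∀ y ∈ Icc (0 : ℝ) 1, SlopesOn (F · y) (Icc 0 1) m₁ M₁)
    (h₂ : ∀ x ∈ Icc (0 : ℝ) 1, SlopesOn (F x) (Icc 0 1) m₂ M₂)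
    (hgap₁ : (1 - 2 * a) * M₁ ≤ m₂) (hgap₂ : (1 - 2 * a) * M₂ ≤ a * m₁)
    (ht : t ∈ Icc (F 0 0) (F 1 1)) (n : ℕ) :
    ∃ x ∈ middleCantor a, ∃ y ∈ middleCantor a, |F x y - t| ≤ a ^ n * (M₁ + M₂) := by
  induction n generalizing F m₁ M₁ m₂ M₂ with
  | zero =>
    refine ⟨0, zero_mem_middleCantor a, 0, zero_mem_middleCantor a, ?_⟩
    have bottom : F 1 0 - F 0 0 ≤ M₁ := by
      linarith [(h₁ 0 unitInterval.zero_mem unitInterval.zero_mem unitInterval.one_mem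
        zero_le_one).2]
    have right : F 1 1 - F 1 0 ≤ M₂ := by
      linarith [(h₂ 1 unitInterval.one_mem unitInterval.zero_mem unitInterval.one_mem
        zero_le_one).2]
    rw [abs_sub_comm, abs_of_nonneg (sub_nonneg.2 ht.1)]
    linarith [ht.2]
  | succ n ih =>
    have ha₁ : a < 1 := by linarith
    obtain ⟨i, j, hij⟩ := exists_cantorBranch_mem_Icc ha₀ ha h₁ h₂ hgap₁ hgap₂ ht
    have maps := cantorBranch_mapsTo_Icc ha₀ ha₁.le
    obtain ⟨x, hx, y, hy, hxy⟩ := ih (F := fun x y => F (cantorBranch a i x) (cantorBranch a j y))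
      (fun y hy => (h₁ _ (maps j hy)).comp_mul_add ha₀ (maps i))
      (fun x hx => (h₂ _ (maps i hx)).comp_mul_add ha₀ (maps j))
      (by nlinarith) (by nlinarith) hij
    exact ⟨_, cantorBranch_mem_middleCantor ha₀ ha₁ i hx,
      _, cantorBranch_mem_middleCantor ha₀ ha₁ j hy, hxy.trans_eq (by ring)⟩

theorem Icc_subset_image2_middleCantor (ha₀ : 0 ≤ a) (ha : a ≤ 1 / 2)
    (h₁ : ∀ y ∈ Icc (0 : ℝ) 1, SlopesOn (F · y) (Icc 0 1) m₁ M₁)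
    (h₂ : ∀ x ∈ Icc (0 : ℝ) 1, SlopesOn (F x) (Icc 0 1) m₂ M₂)
    (hgap₁ : (1 - 2 * a) * M₁ ≤ m₂) (hgap₂ : (1 - 2 * a) * M₂ ≤ a * m₁) :
    Icc (F 0 0) (F 1 1) ⊆ image2 F (middleCantor a) (middleCantor a) := by
  intro t ht
  have ha₁ : a < 1 := by linarith
  have hC := isCompact_middleCantor ha₀ ha₁
  have hCI := middleCantor_subset_Icc ha₀ ha₁
  have image_closed : IsClosed (image2 F (middleCantor a) (middleCantor a)) := by
    rw [← image_uncurry_prod]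
    exact ((hC.prod hC).image_of_continuousOn
      ((continuousOn_uncurry_of_slopesOn h₁ h₂).mono (prod_mono hCI hCI))).isClosed
  choose x hx y hy hxy using exists_middleCantor_abs_sub_le ha₀ ha h₁ h₂ hgap₁ hgap₂ ht
  have bound_tendsto : Tendsto (fun n => a ^ n * (M₁ + M₂)) atTop (𝓝 0) := by
    simpa using (tendsto_pow_atTop_nhds_zero_of_lt_one ha₀ ha₁).mul_const (M₁ + M₂)
  have approx : Tendsto (fun n => F (x n) (y n)) atTop (𝓝 t) :=
    tendsto_iff_norm_sub_tendsto_zero.2 (squeeze_zero (fun _ => norm_nonneg _) hxy bound_tendsto)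
  exact image_closed.mem_of_tendsto approx (.of_forall fun n => mem_image2_of_mem (hx n) (hy n))

end Image

lemma Icc_subset_image2_sq_add_sq {a p q r : ℝ} (ha₀ : 0 ≤ a) (ha : a ≤ 1 / 2) (hr : 0 ≤ r)
    (hpq : (1 - 2 * a) * (p + r) ≤ q) (hqp : (1 - 2 * a) * (q + r) ≤ a * p) :
    Icc (p ^ 2 + q ^ 2) ((r + p) ^ 2 + (r + q) ^ 2) ⊆
      image2 (fun x y => (r * x + p) ^ 2 + (r * y + q) ^ 2) (middleCantor a) (middleCantor a) := by
  have sq_slopes (b : ℝ) :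
      SlopesOn (fun x => (r * x + b) ^ 2) (Icc 0 1) (r * (2 * b)) (r * (2 * (b + r))) :=
    (slopesOn_sq b (b + r)).comp_mul_add hr fun x hx =>
      ⟨by nlinarith [hx.1], by nlinarith [hx.2]⟩
  have image := Icc_subset_image2_middleCantor ha₀ ha
    (F := fun x y => (r * x + p) ^ 2 + (r * y + q) ^ 2)
    (fun y _ => (sq_slopes p).add_const _) (fun x _ => (sq_slopes q).const_add _)
    (by nlinarith) (by nlinarith)
  simpa only [mul_zero, mul_one, zero_add] using image

-- On the copy of `C_a × C_a` of size `r` at `(1, 1 - a)`, the two gap inequalities become, as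
-- `r → 0`, `1 - 2a ≤ 1 - a` and `(1 - 2a)(1 - a) ≤ a`; strictness of the latter is `2(1 - a)² < 1`.
theorem stmt15_general {a : ℝ} (ha : a ≤ 1 / 2) (ha' : 2 * (1 - a) ^ 2 < 1) :
    ∃ u v : ℝ, u < v ∧ Set.Ioo u v ⊆
      {z : ℝ | ∃ x ∈ middleCantor a, ∃ y ∈ middleCantor a, z = x ^ 2 + y ^ 2} := by
  have ha₀ : 0 < a := by nlinarith
  have ha₁ : a < 1 := by linarith
  obtain ⟨n, hn⟩ : ∃ n, a ^ n < 1 - 2 * (1 - a) ^ 2 :=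
    exists_pow_lt_of_lt_one (by linarith) ha₁
  let r := a ^ (n + 1)
  have hr₀ : 0 < r := by positivity
  have hr₁ : r < 1 := pow_lt_one₀ ha₀.le ha₁ n.succ_ne_zero
  have hr_lt : r < 1 - 2 * (1 - a) ^ 2 :=
    (pow_le_pow_of_le_one ha₀.le ha₁.le n.le_succ).trans_lt hn
  have interval_subset := Icc_subset_image2_sq_add_sq (p := 1 - r) (q := 1 - a) ha₀.le ha hr₀.le
    (by linarith) (by nlinarith)
  refine ⟨(1 - r) ^ 2 + (1 - a) ^ 2, (r + (1 - r)) ^ 2 + (r + (1 - a)) ^ 2, ?_, fun t ht => ?_⟩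
  · gcongr <;> linarith
  · obtain ⟨x, hx, y, hy, rfl⟩ := interval_subset (Ioo_subset_Icc_self ht)
    exact ⟨_, pow_mul_add_one_sub_pow_mem_middleCantor ha₀.le ha₁ (n + 1) hx,
      _, pow_succ_mul_add_one_sub_mem_middleCantor ha₀.le ha₁ n hy, rfl⟩

theorem stmt15 :
    ∃ u v : ℝ, u < v ∧ Set.Ioo u v ⊆
      {z : ℝ | ∃ x ∈ middleCantor (1 / 3), ∃ y ∈ middleCantor (1 / 3), z = x ^ 2 + y ^ 2} :=
  stmt15_general (by norm_num) (by norm_num)
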